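/- Let Δ be a program and M a nonempty family of Herbrand models of Δ. Then the intersection ⋂M is again a Herbrand model of Δ. -/

import Mathlib

/-!
The theorem holds because satisfaction of goals is monotone in the interpretation
(`GoalSat.mono`): goals contain no implication and no negation, so enlarging the set of true
atoms preserves truth. Consequently a clause true in every member of a family is true in the
intersection (`ClSat.sInter`): in the case `G ⇒ D`, a goal `G` true in the intersection is true
in each member, so `D` is true in each member and, by induction, in the intersection. The
connectives `∧`, `∀` and `И` are universal on the clause side, and atoms are immediate.

Equivariance passes to intersections (`EquivariantSet.sInter`) because a swapping is an
involution (`NAtom.swap_swap`), and nonemptiness of the family gives inclusion in the Herbrand base.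
-/

/-!  Nominal logic programming: common infrastructure. -/

noncomputable section
open scoped Classical
set_option linter.unusedVariables false
set_option linter.unreachableTactic false
set_option linter.unusedTactic false

/-- Sorts of a nominal signature: name sorts `ν`, data sorts `δ`,
and abstraction sorts `⟨ν⟩σ`. -/
inductive NomSort (N D : Type) : Type
  | name : N → NomSort N D
  | data : D → NomSort N D
  | nabs : N → NomSort N D → NomSort N D

/-- A nominal (many-sorted, first-order) signature. -/
structure NomSig : Type 1 where
  NSort : Type
  DSort : Type
  Func : Type
  Rel : Type
  fArgs : Func → List (NomSort NSort DSort)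
  fRes : Func → DSort
  rArgs : Rel → List (NomSort NSort DSort)

/-- Names: countably infinitely many for each name sort. -/
abbrev NomSig.Name (L : NomSig) : Type := L.NSort × ℕ

variable {L : NomSig}

/-- The transposition (a b) acting on names. -/
def swapName (a b c : L.Name) : L.Name :=
  if c = a then b else if c = b then a else c

/-- Nominal terms (possibly containing variables). -/
inductive Tm (L : NomSig) : Type
  | var : ℕ → Tm L
  | name : L.Name → Tm L
  | app : L.Func → List (Tm L) → Tm L
  | abs : L.Name → Tm L → Tm L

namespace Tm

/-- Apply a renaming of names to every name occurrence (including binding ones). -/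
def rename (f : L.Name → L.Name) : Tm L → Tm L
  | var X => var X
  | name c => name (f c)
  | app g ts => app g (ts.attach.map fun x => rename f x.1)
  | abs c t => abs (f c) (rename f t)
decreasing_by
  all_goals simp_wf
  all_goals first
    | (have := List.sizeOf_lt_of_mem x.2; omega)
    | omega

/-- The swapping `(a b)·t`. -/
def swap (a b : L.Name) (t : Tm L) : Tm L := t.rename (swapName a b)

/-- Apply a substitution of terms for variables. -/
def subst (θ : ℕ → Tm L) : Tm L → Tm L
  | var X => θ X
  | name c => name c
  | app g ts => app g (ts.attach.map fun x => subst θ x.1)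
  | abs c t => abs c (subst θ t)
decreasing_by
  all_goals simp_wf
  all_goals first
    | (have := List.sizeOf_lt_of_mem x.2; omega)
    | omega

/-- Syntactic free-name occurrence (a name occurring outside the scope of
an abstraction of the same name). -/
inductive FNa : L.Name → Tm L → Prop
  | name (a : L.Name) : FNa a (name a)
  | app (a : L.Name) (f : L.Func) (ts : List (Tm L)) (t : Tm L) :
      t ∈ ts → FNa a t → FNa a (app f ts)
  | abs (a b : L.Name) (t : Tm L) : a ≠ b → FNa a t → FNa a (abs b t)

/-- Free variable occurrence in a term. -/
inductive FVa : ℕ → Tm L → Prop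
  | var (X : ℕ) : FVa X (var X)
  | app (X : ℕ) (f : L.Func) (ts : List (Tm L)) (t : Tm L) :
      t ∈ ts → FVa X t → FVa X (app f ts)
  | abs (X : ℕ) (b : L.Name) (t : Tm L) : FVa X t → FVa X (abs b t)

end Tm

/-- The substitution `[t/X]`. -/
def substSingle (X : ℕ) (t : Tm L) : ℕ → Tm L := fun Y => if Y = X then t else Tm.var Y

/-- `IsTm t σ`: `t` is a well-sorted ground term of sort `σ`. -/
inductive IsTm : Tm L → NomSort L.NSort L.DSort → Prop
  | name (a : L.Name) : IsTm (Tm.name a) (NomSort.name a.1)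
  | app (f : L.Func) (ts : List (Tm L)) :
      ts.length = (L.fArgs f).length →
      (∀ p ∈ ts.zip (L.fArgs f), IsTm p.1 p.2) →
      IsTm (Tm.app f ts) (NomSort.data (L.fRes f))
  | abs (a : L.Name) (t : Tm L) (σ : NomSort L.NSort L.DSort) :
      IsTm t σ → IsTm (Tm.abs a t) (NomSort.nabs a.1 σ)

/-- Well-sortedness of a (possibly open) term relative to a sort
assignment `vs` for variables. -/
inductive TmS (vs : ℕ → NomSort L.NSort L.DSort) : Tm L → NomSort L.NSort L.DSort → Prop
  | var (X : ℕ) : TmS vs (Tm.var X) (vs X)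
  | name (a : L.Name) : TmS vs (Tm.name a) (NomSort.name a.1)
  | app (f : L.Func) (ts : List (Tm L)) :
      ts.length = (L.fArgs f).length →
      (∀ p ∈ ts.zip (L.fArgs f), TmS vs p.1 p.2) →
      TmS vs (Tm.app f ts) (NomSort.data (L.fRes f))
  | abs (a : L.Name) (t : Tm L) (σ : NomSort L.NSort L.DSort) :
      TmS vs t σ → TmS vs (Tm.abs a t) (NomSort.nabs a.1 σ)

/-- Freshness `a # t` on ground terms. -/
inductive Fresh : L.Name → Tm L → Prop
  | name (a b : L.Name) : a ≠ b → Fresh a (Tm.name b)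
  | app (a : L.Name) (f : L.Func) (ts : List (Tm L)) :
      (∀ t ∈ ts, Fresh a t) → Fresh a (Tm.app f ts)
  | absSame (a : L.Name) (t : Tm L) : Fresh a (Tm.abs a t)
  | absDiff (a b : L.Name) (t : Tm L) : a ≠ b → Fresh a t → Fresh a (Tm.abs b t)

/-- Alpha-equivalence `t ≈ u` on ground terms. -/
inductive Aeq : Tm L → Tm L → Prop
  | name (a : L.Name) : Aeq (Tm.name a) (Tm.name a)
  | app (f : L.Func) (ts us : List (Tm L)) :
      ts.length = us.length → (∀ p ∈ ts.zip us, Aeq p.1 p.2) →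
      Aeq (Tm.app f ts) (Tm.app f us)
  | absSame (a : L.Name) (t u : Tm L) : Aeq t u → Aeq (Tm.abs a t) (Tm.abs a u)
  | absDiff (a b : L.Name) (t u : Tm L) :
      Fresh a u → Aeq t (Tm.swap a b u) → Aeq (Tm.abs a t) (Tm.abs b u)

/-- The support of a ground term: the set of names not fresh for it. -/
def suppTm (t : Tm L) : Set L.Name := {a | ¬ Fresh a t}

/-- Finite sort-preserving bijections (permutations) of names. -/
def IsPerm (π : L.Name → L.Name) : Prop :=
  Function.Bijective π ∧ (∀ a, (π a).1 = a.1) ∧ {a | π a ≠ a}.Finite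

/-- `t ∼ u`: equal up to a permutation of names. -/
def SimTm (t u : Tm L) : Prop := ∃ π, IsPerm π ∧ Aeq (t.rename π) u

/-- Atomic formulas `p(t₁,…,tₙ)`. -/
structure NAtom (L : NomSig) : Type where
  rel : L.Rel
  args : List (Tm L)

def NAtom.rename (f : L.Name → L.Name) (A : NAtom L) : NAtom L :=
  ⟨A.rel, A.args.map (Tm.rename f)⟩

def NAtom.swap (a b : L.Name) (A : NAtom L) : NAtom L := A.rename (swapName a b)

def NAtom.subst (θ : ℕ → Tm L) (A : NAtom L) : NAtom L :=
  ⟨A.rel, A.args.map (Tm.subst θ)⟩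

def NAtom.FNa (a : L.Name) (A : NAtom L) : Prop := ∃ t ∈ A.args, Tm.FNa a t
def NAtom.FVa (X : ℕ) (A : NAtom L) : Prop := ∃ t ∈ A.args, Tm.FVa X t

/-- Alpha-equivalence of atoms. -/
def AtomAeq (A B : NAtom L) : Prop :=
  A.rel = B.rel ∧ A.args.length = B.args.length ∧ ∀ p ∈ A.args.zip B.args, Aeq p.1 p.2

/-- `A ∼ B` for atoms: equal up to a permutation of names. -/
def AtomSim (A B : NAtom L) : Prop := ∃ π, IsPerm π ∧ AtomAeq (A.rename π) B

/-- Well-sortedness of an atom relative to a variable sort assignment. -/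
def AtomS (vs : ℕ → NomSort L.NSort L.DSort) (A : NAtom L) : Prop :=
  A.args.length = (L.rArgs A.rel).length ∧ ∀ p ∈ A.args.zip (L.rArgs A.rel), TmS vs p.1 p.2

/-- The Herbrand base: all well-sorted ground atoms. -/
def BL (L : NomSig) : Set (NAtom L) :=
  {A | A.args.length = (L.rArgs A.rel).length ∧ ∀ p ∈ A.args.zip (L.rArgs A.rel), IsTm p.1 p.2}

/-- An equivariant set of atoms: closed under all same-sorted swappings. -/
def EquivariantSet (S : Set (NAtom L)) : Prop :=
  ∀ a b : L.Name, a.1 = b.1 → NAtom.swap a b '' S = S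


/-! ### Constraints -/

/-- Constraints `C`. -/
inductive NCon (L : NomSig) : Type
  | tt : NCon L
  | eq (t u : Tm L) : NCon L
  | fr (a : L.Name) (t : Tm L) : NCon L
  | sim (t u : Tm L) : NCon L
  | simA (A B : NAtom L) : NCon L
  | aeqA (A B : NAtom L) : NCon L
  | and (C C' : NCon L) : NCon L
  | ex (X : ℕ) (σ : NomSort L.NSort L.DSort) (C : NCon L) : NCon L
  | nu (a : L.Name) (C : NCon L) : NCon L

namespace NCon

def rename (f : L.Name → L.Name) : NCon L → NCon L
  | tt => tt
  | eq t u => eq (t.rename f) (u.rename f)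
  | fr a t => fr (f a) (t.rename f)
  | sim t u => sim (t.rename f) (u.rename f)
  | simA A B => simA (A.rename f) (B.rename f)
  | aeqA A B => aeqA (A.rename f) (B.rename f)
  | and C C' => and (rename f C) (rename f C')
  | ex X σ C => ex X σ (rename f C)
  | nu a C => nu (f a) (rename f C)

/-- Swapping `(a b)·C`, acting on all names (bound names included). -/
def swap (a b : L.Name) (C : NCon L) : NCon L := C.rename (swapName a b)

def subst (θ : ℕ → Tm L) : NCon L → NCon L
  | tt => tt
  | eq t u => eq (t.subst θ) (u.subst θ)
  | fr a t => fr a (t.subst θ)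
  | sim t u => sim (t.subst θ) (u.subst θ)
  | simA A B => simA (A.subst θ) (B.subst θ)
  | aeqA A B => aeqA (A.subst θ) (B.subst θ)
  | and C C' => and (subst θ C) (subst θ C')
  | ex X σ C => ex X σ (subst (Function.update θ X (Tm.var X)) C)
  | nu a C => nu a (subst θ C)

def size : NCon L → ℕ
  | and C C' => size C + size C' + 1
  | ex _ _ C => size C + 1
  | nu _ C => size C + 1
  | _ => 1

@[simp] theorem size_rename (f : L.Name → L.Name) :
    ∀ C : NCon L, (C.rename f).size = C.size := by
  intro C; induction C <;> simp [rename, size, *]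

@[simp] theorem size_swap (a b : L.Name) (C : NCon L) : (C.swap a b).size = C.size :=
  size_rename _ C

@[simp] theorem size_subst :
    ∀ (C : NCon L) (θ : ℕ → Tm L), (C.subst θ).size = C.size := by
  intro C; induction C <;> intro θ <;> simp [subst, size, *]

/-- Free names of a constraint. -/
inductive FNa : L.Name → NCon L → Prop
  | eq₁ (a : L.Name) (t u : Tm L) : Tm.FNa a t → FNa a (eq t u)
  | eq₂ (a : L.Name) (t u : Tm L) : Tm.FNa a u → FNa a (eq t u)
  | frN (a : L.Name) (t : Tm L) : FNa a (fr a t)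
  | frT (a c : L.Name) (t : Tm L) : Tm.FNa a t → FNa a (fr c t)
  | sim₁ (a : L.Name) (t u : Tm L) : Tm.FNa a t → FNa a (sim t u)
  | sim₂ (a : L.Name) (t u : Tm L) : Tm.FNa a u → FNa a (sim t u)
  | simA₁ (a : L.Name) (A B : NAtom L) : NAtom.FNa a A → FNa a (simA A B)
  | simA₂ (a : L.Name) (A B : NAtom L) : NAtom.FNa a B → FNa a (simA A B)
  | aeqA₁ (a : L.Name) (A B : NAtom L) : NAtom.FNa a A → FNa a (aeqA A B)
  | aeqA₂ (a : L.Name) (A B : NAtom L) : NAtom.FNa a B → FNa a (aeqA A B)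
  | and₁ (a : L.Name) (C C' : NCon L) : FNa a C → FNa a (and C C')
  | and₂ (a : L.Name) (C C' : NCon L) : FNa a C' → FNa a (and C C')
  | ex (a : L.Name) (X : ℕ) (σ : NomSort L.NSort L.DSort) (C : NCon L) :
      FNa a C → FNa a (ex X σ C)
  | nu (a c : L.Name) (C : NCon L) : a ≠ c → FNa a C → FNa a (nu c C)

/-- Free variables of a constraint. -/
inductive FVa : ℕ → NCon L → Prop
  | eq₁ (X : ℕ) (t u : Tm L) : Tm.FVa X t → FVa X (eq t u)
  | eq₂ (X : ℕ) (t u : Tm L) : Tm.FVa X u → FVa X (eq t u)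
  | frT (X : ℕ) (c : L.Name) (t : Tm L) : Tm.FVa X t → FVa X (fr c t)
  | sim₁ (X : ℕ) (t u : Tm L) : Tm.FVa X t → FVa X (sim t u)
  | sim₂ (X : ℕ) (t u : Tm L) : Tm.FVa X u → FVa X (sim t u)
  | simA₁ (X : ℕ) (A B : NAtom L) : NAtom.FVa X A → FVa X (simA A B)
  | simA₂ (X : ℕ) (A B : NAtom L) : NAtom.FVa X B → FVa X (simA A B)
  | aeqA₁ (X : ℕ) (A B : NAtom L) : NAtom.FVa X A → FVa X (aeqA A B)
  | aeqA₂ (X : ℕ) (A B : NAtom L) : NAtom.FVa X B → FVa X (aeqA A B)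
  | and₁ (X : ℕ) (C C' : NCon L) : FVa X C → FVa X (and C C')
  | and₂ (X : ℕ) (C C' : NCon L) : FVa X C' → FVa X (and C C')
  | ex (X X' : ℕ) (σ : NomSort L.NSort L.DSort) (C : NCon L) :
      X ≠ X' → FVa X C → FVa X (ex X' σ C)
  | nu (X : ℕ) (c : L.Name) (C : NCon L) : FVa X C → FVa X (nu c C)

/-- Well-sortedness of a constraint relative to a variable sort assignment. -/
def WS (vs : ℕ → NomSort L.NSort L.DSort) : NCon L → Prop
  | tt => True
  | eq t u => ∃ σ, TmS vs t σ ∧ TmS vs u σ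
  | fr _ t => ∃ σ, TmS vs t σ
  | sim t u => ∃ σ, TmS vs t σ ∧ TmS vs u σ
  | simA A B => AtomS vs A ∧ AtomS vs B
  | aeqA A B => AtomS vs A ∧ AtomS vs B
  | and C C' => WS vs C ∧ WS vs C'
  | ex X σ C => WS (Function.update vs X σ) C
  | nu _ C => WS vs C

end NCon

/-- Satisfaction `⊨ C` of a (closed) constraint. -/
def ConSat : NCon L → Prop
  | NCon.tt => True
  | NCon.eq t u => Aeq t u
  | NCon.fr a t => Fresh a t
  | NCon.sim t u => SimTm t u
  | NCon.simA A B => AtomSim A B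
  | NCon.aeqA A B => AtomAeq A B
  | NCon.and C C' => ConSat C ∧ ConSat C'
  | NCon.ex X σ C => ∃ t : Tm L, IsTm t σ ∧ ConSat (C.subst (substSingle X t))
  | NCon.nu a C => ∀ b : L.Name, b.1 = a.1 → ¬ NCon.FNa b (NCon.nu a C) → ConSat (C.swap b a)
termination_by C => C.size
decreasing_by all_goals (simp [NCon.size]; try omega)
/-! ### Goals -/

/-- Goal formulas `G`. -/
inductive NGoal (L : NomSig) : Type
  | tt : NGoal L
  | atom (A : NAtom L) : NGoal L
  | con (C : NCon L) : NGoal L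
  | and (G G' : NGoal L) : NGoal L
  | or (G G' : NGoal L) : NGoal L
  | ex (X : ℕ) (σ : NomSort L.NSort L.DSort) (G : NGoal L) : NGoal L
  | nu (a : L.Name) (G : NGoal L) : NGoal L

namespace NGoal

def rename (f : L.Name → L.Name) : NGoal L → NGoal L
  | tt => tt
  | atom A => atom (A.rename f)
  | con C => con (C.rename f)
  | and G G' => and (rename f G) (rename f G')
  | or G G' => or (rename f G) (rename f G')
  | ex X σ G => ex X σ (rename f G)
  | nu a G => nu (f a) (rename f G)

def swap (a b : L.Name) (G : NGoal L) : NGoal L := G.rename (swapName a b)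

def subst (θ : ℕ → Tm L) : NGoal L → NGoal L
  | tt => tt
  | atom A => atom (A.subst θ)
  | con C => con (C.subst θ)
  | and G G' => and (subst θ G) (subst θ G')
  | or G G' => or (subst θ G) (subst θ G')
  | ex X σ G => ex X σ (subst (Function.update θ X (Tm.var X)) G)
  | nu a G => nu a (subst θ G)

def size : NGoal L → ℕ
  | and G G' => size G + size G' + 1
  | or G G' => size G + size G' + 1
  | ex _ _ G => size G + 1
  | nu _ G => size G + 1
  | _ => 1

@[simp] theorem size_rename (f : L.Name → L.Name) :
    ∀ G : NGoal L, (G.rename f).size = G.size := by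
  intro G; induction G <;> simp [rename, size, *]

@[simp] theorem size_swap (a b : L.Name) (G : NGoal L) : (G.swap a b).size = G.size :=
  size_rename _ G

@[simp] theorem size_subst :
    ∀ (G : NGoal L) (θ : ℕ → Tm L), (G.subst θ).size = G.size := by
  intro G; induction G <;> intro θ <;> simp [subst, size, *]

/-- Free names of a goal. -/
inductive FNa : L.Name → NGoal L → Prop
  | atom (a : L.Name) (A : NAtom L) : NAtom.FNa a A → FNa a (atom A)
  | con (a : L.Name) (C : NCon L) : NCon.FNa a C → FNa a (con C)
  | and₁ (a : L.Name) (G G' : NGoal L) : FNa a G → FNa a (and G G')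
  | and₂ (a : L.Name) (G G' : NGoal L) : FNa a G' → FNa a (and G G')
  | or₁ (a : L.Name) (G G' : NGoal L) : FNa a G → FNa a (or G G')
  | or₂ (a : L.Name) (G G' : NGoal L) : FNa a G' → FNa a (or G G')
  | ex (a : L.Name) (X : ℕ) (σ : NomSort L.NSort L.DSort) (G : NGoal L) :
      FNa a G → FNa a (ex X σ G)
  | nu (a c : L.Name) (G : NGoal L) : a ≠ c → FNa a G → FNa a (nu c G)

/-- Free variables of a goal. -/
inductive FVa : ℕ → NGoal L → Prop
  | atom (X : ℕ) (A : NAtom L) : NAtom.FVa X A → FVa X (atom A)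
  | con (X : ℕ) (C : NCon L) : NCon.FVa X C → FVa X (con C)
  | and₁ (X : ℕ) (G G' : NGoal L) : FVa X G → FVa X (and G G')
  | and₂ (X : ℕ) (G G' : NGoal L) : FVa X G' → FVa X (and G G')
  | or₁ (X : ℕ) (G G' : NGoal L) : FVa X G → FVa X (or G G')
  | or₂ (X : ℕ) (G G' : NGoal L) : FVa X G' → FVa X (or G G')
  | ex (X X' : ℕ) (σ : NomSort L.NSort L.DSort) (G : NGoal L) :
      X ≠ X' → FVa X G → FVa X (ex X' σ G)
  | nu (X : ℕ) (c : L.Name) (G : NGoal L) : FVa X G → FVa X (nu c G)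

/-- Well-sortedness of a goal relative to a variable sort assignment. -/
def WS (vs : ℕ → NomSort L.NSort L.DSort) : NGoal L → Prop
  | tt => True
  | atom A => AtomS vs A
  | con C => NCon.WS vs C
  | and G G' => WS vs G ∧ WS vs G'
  | or G G' => WS vs G ∧ WS vs G'
  | ex X σ G => WS (Function.update vs X σ) G
  | nu _ G => WS vs G

end NGoal

/-- Satisfaction `S ⊨ G` of a (closed) goal by a Herbrand interpretation. -/
def GoalSat (S : Set (NAtom L)) : NGoal L → Prop
  | NGoal.tt => True
  | NGoal.atom A => A ∈ S
  | NGoal.con C => ConSat C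
  | NGoal.and G G' => GoalSat S G ∧ GoalSat S G'
  | NGoal.or G G' => GoalSat S G ∨ GoalSat S G'
  | NGoal.ex X σ G => ∃ t : Tm L, IsTm t σ ∧ GoalSat S (G.subst (substSingle X t))
  | NGoal.nu a G => ∀ b : L.Name, b.1 = a.1 → ¬ NGoal.FNa b (NGoal.nu a G) →
      GoalSat S (G.swap b a)
termination_by G => G.size
decreasing_by all_goals (simp [NGoal.size]; try omega)

/-! ### Program clauses -/

/-- Program clauses `D`. -/
inductive NCl (L : NomSig) : Type
  | tt : NCl L
  | atom (A : NAtom L) : NCl L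
  | and (D D' : NCl L) : NCl L
  | imp (G : NGoal L) (D : NCl L) : NCl L
  | all (X : ℕ) (σ : NomSort L.NSort L.DSort) (D : NCl L) : NCl L
  | nu (a : L.Name) (D : NCl L) : NCl L

namespace NCl

def rename (f : L.Name → L.Name) : NCl L → NCl L
  | tt => tt
  | atom A => atom (A.rename f)
  | and D D' => and (rename f D) (rename f D')
  | imp G D => imp (G.rename f) (rename f D)
  | all X σ D => all X σ (rename f D)
  | nu a D => nu (f a) (rename f D)

def swap (a b : L.Name) (D : NCl L) : NCl L := D.rename (swapName a b)

def subst (θ : ℕ → Tm L) : NCl L → NCl L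
  | tt => tt
  | atom A => atom (A.subst θ)
  | and D D' => and (subst θ D) (subst θ D')
  | imp G D => imp (G.subst θ) (subst θ D)
  | all X σ D => all X σ (subst (Function.update θ X (Tm.var X)) D)
  | nu a D => nu a (subst θ D)

def size : NCl L → ℕ
  | and D D' => size D + size D' + 1
  | imp _ D => size D + 1
  | all _ _ D => size D + 1
  | nu _ D => size D + 1
  | _ => 1

@[simp] theorem size_rename (f : L.Name → L.Name) :
    ∀ D : NCl L, (D.rename f).size = D.size := by
  intro D; induction D <;> simp [rename, size, *]

@[simp] theorem size_swap (a b : L.Name) (D : NCl L) : (D.swap a b).size = D.size :=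
  size_rename _ D

@[simp] theorem size_subst :
    ∀ (D : NCl L) (θ : ℕ → Tm L), (D.subst θ).size = D.size := by
  intro D; induction D <;> intro θ <;> simp [subst, size, *]

/-- Free names of a program clause. -/
inductive FNa : L.Name → NCl L → Prop
  | atom (a : L.Name) (A : NAtom L) : NAtom.FNa a A → FNa a (atom A)
  | and₁ (a : L.Name) (D D' : NCl L) : FNa a D → FNa a (and D D')
  | and₂ (a : L.Name) (D D' : NCl L) : FNa a D' → FNa a (and D D')
  | imp₁ (a : L.Name) (G : NGoal L) (D : NCl L) : NGoal.FNa a G → FNa a (imp G D)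
  | imp₂ (a : L.Name) (G : NGoal L) (D : NCl L) : FNa a D → FNa a (imp G D)
  | all (a : L.Name) (X : ℕ) (σ : NomSort L.NSort L.DSort) (D : NCl L) :
      FNa a D → FNa a (all X σ D)
  | nu (a c : L.Name) (D : NCl L) : a ≠ c → FNa a D → FNa a (nu c D)

/-- Free variables of a program clause. -/
inductive FVa : ℕ → NCl L → Prop
  | atom (X : ℕ) (A : NAtom L) : NAtom.FVa X A → FVa X (atom A)
  | and₁ (X : ℕ) (D D' : NCl L) : FVa X D → FVa X (and D D')
  | and₂ (X : ℕ) (D D' : NCl L) : FVa X D' → FVa X (and D D')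
  | imp₁ (X : ℕ) (G : NGoal L) (D : NCl L) : NGoal.FVa X G → FVa X (imp G D)
  | imp₂ (X : ℕ) (G : NGoal L) (D : NCl L) : FVa X D → FVa X (imp G D)
  | all (X X' : ℕ) (σ : NomSort L.NSort L.DSort) (D : NCl L) :
      X ≠ X' → FVa X D → FVa X (all X' σ D)
  | nu (X : ℕ) (c : L.Name) (D : NCl L) : FVa X D → FVa X (nu c D)

/-- Well-sortedness of a program clause relative to a variable sort assignment. -/
def WS (vs : ℕ → NomSort L.NSort L.DSort) : NCl L → Prop
  | tt => True
  | atom A => AtomS vs A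
  | and D D' => WS vs D ∧ WS vs D'
  | imp G D => NGoal.WS vs G ∧ WS vs D
  | all X σ D => WS (Function.update vs X σ) D
  | nu _ D => WS vs D

/-- A clause with no free variables. -/
def ClosedV (D : NCl L) : Prop := ∀ X : ℕ, ¬ FVa X D

/-- A clause with no free names. -/
def ClosedN (D : NCl L) : Prop := ∀ a : L.Name, ¬ FNa a D

/-- И-goal clauses: no И-quantified clause subformulas (goals may contain И). -/
inductive NuGoal : NCl L → Prop
  | tt : NuGoal tt
  | atom (A : NAtom L) : NuGoal (atom A)
  | and (D D' : NCl L) : NuGoal D → NuGoal D' → NuGoal (and D D')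
  | imp (G : NGoal L) (D : NCl L) : NuGoal D → NuGoal (imp G D)
  | all (X : ℕ) (σ : NomSort L.NSort L.DSort) (D : NCl L) : NuGoal D → NuGoal (all X σ D)

end NCl

/-- Satisfaction `S ⊨ D` of a (closed) program clause. -/
def ClSat (S : Set (NAtom L)) : NCl L → Prop
  | NCl.tt => True
  | NCl.atom A => A ∈ S
  | NCl.and D D' => ClSat S D ∧ ClSat S D'
  | NCl.imp G D => GoalSat S G → ClSat S D
  | NCl.all X σ D => ∀ t : Tm L, IsTm t σ → ClSat S (D.subst (substSingle X t))
  | NCl.nu a D => ∀ b : L.Name, b.1 = a.1 → ¬ NCl.FNa b (NCl.nu a D) →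
      ClSat S (D.swap b a)
termination_by D => D.size
decreasing_by all_goals (simp [NCl.size]; try omega)
/-! ### General first-order nominal formulas -/

/-- Formulas of nominal logic. -/
inductive NFm (L : NomSig) : Type
  | tt : NFm L
  | ff : NFm L
  | atom (A : NAtom L) : NFm L
  | eq (t u : Tm L) : NFm L
  | fr (a : L.Name) (t : Tm L) : NFm L
  | sim (t u : Tm L) : NFm L
  | imp (φ ψ : NFm L) : NFm L
  | and (φ ψ : NFm L) : NFm L
  | or (φ ψ : NFm L) : NFm L
  | all (X : ℕ) (σ : NomSort L.NSort L.DSort) (φ : NFm L) : NFm L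
  | ex (X : ℕ) (σ : NomSort L.NSort L.DSort) (φ : NFm L) : NFm L
  | nu (a : L.Name) (φ : NFm L) : NFm L

namespace NFm

def rename (f : L.Name → L.Name) : NFm L → NFm L
  | tt => tt
  | ff => ff
  | atom A => atom (A.rename f)
  | eq t u => eq (t.rename f) (u.rename f)
  | fr a t => fr (f a) (t.rename f)
  | sim t u => sim (t.rename f) (u.rename f)
  | imp φ ψ => imp (rename f φ) (rename f ψ)
  | and φ ψ => and (rename f φ) (rename f ψ)
  | or φ ψ => or (rename f φ) (rename f ψ)
  | all X σ φ => all X σ (rename f φ)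
  | ex X σ φ => ex X σ (rename f φ)
  | nu a φ => nu (f a) (rename f φ)

/-- Swapping `(a b)·φ`. -/
def swap (a b : L.Name) (φ : NFm L) : NFm L := φ.rename (swapName a b)

def subst (θ : ℕ → Tm L) : NFm L → NFm L
  | tt => tt
  | ff => ff
  | atom A => atom (A.subst θ)
  | eq t u => eq (t.subst θ) (u.subst θ)
  | fr a t => fr a (t.subst θ)
  | sim t u => sim (t.subst θ) (u.subst θ)
  | imp φ ψ => imp (subst θ φ) (subst θ ψ)
  | and φ ψ => and (subst θ φ) (subst θ ψ)
  | or φ ψ => or (subst θ φ) (subst θ ψ)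
  | all X σ φ => all X σ (subst (Function.update θ X (Tm.var X)) φ)
  | ex X σ φ => ex X σ (subst (Function.update θ X (Tm.var X)) φ)
  | nu a φ => nu a (subst θ φ)

def size : NFm L → ℕ
  | imp φ ψ => size φ + size ψ + 1
  | and φ ψ => size φ + size ψ + 1
  | or φ ψ => size φ + size ψ + 1
  | all _ _ φ => size φ + 1
  | ex _ _ φ => size φ + 1
  | nu _ φ => size φ + 1
  | _ => 1

@[simp] theorem size_rename (f : L.Name → L.Name) :
    ∀ φ : NFm L, (φ.rename f).size = φ.size := by
  intro φ; induction φ <;> simp [rename, size, *]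

@[simp] theorem size_swap (a b : L.Name) (φ : NFm L) : (φ.swap a b).size = φ.size :=
  size_rename _ φ

@[simp] theorem size_subst :
    ∀ (φ : NFm L) (θ : ℕ → Tm L), (φ.subst θ).size = φ.size := by
  intro φ; induction φ <;> intro θ <;> simp [subst, size, *]

/-- Free names of a formula. -/
inductive FNa : L.Name → NFm L → Prop
  | atom (a : L.Name) (A : NAtom L) : NAtom.FNa a A → FNa a (atom A)
  | eq₁ (a : L.Name) (t u : Tm L) : Tm.FNa a t → FNa a (eq t u)
  | eq₂ (a : L.Name) (t u : Tm L) : Tm.FNa a u → FNa a (eq t u)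
  | frN (a : L.Name) (t : Tm L) : FNa a (fr a t)
  | frT (a c : L.Name) (t : Tm L) : Tm.FNa a t → FNa a (fr c t)
  | sim₁ (a : L.Name) (t u : Tm L) : Tm.FNa a t → FNa a (sim t u)
  | sim₂ (a : L.Name) (t u : Tm L) : Tm.FNa a u → FNa a (sim t u)
  | imp₁ (a : L.Name) (φ ψ : NFm L) : FNa a φ → FNa a (imp φ ψ)
  | imp₂ (a : L.Name) (φ ψ : NFm L) : FNa a ψ → FNa a (imp φ ψ)
  | and₁ (a : L.Name) (φ ψ : NFm L) : FNa a φ → FNa a (and φ ψ)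
  | and₂ (a : L.Name) (φ ψ : NFm L) : FNa a ψ → FNa a (and φ ψ)
  | or₁ (a : L.Name) (φ ψ : NFm L) : FNa a φ → FNa a (or φ ψ)
  | or₂ (a : L.Name) (φ ψ : NFm L) : FNa a ψ → FNa a (or φ ψ)
  | all (a : L.Name) (X : ℕ) (σ : NomSort L.NSort L.DSort) (φ : NFm L) :
      FNa a φ → FNa a (all X σ φ)
  | ex (a : L.Name) (X : ℕ) (σ : NomSort L.NSort L.DSort) (φ : NFm L) :
      FNa a φ → FNa a (ex X σ φ)
  | nu (a c : L.Name) (φ : NFm L) : a ≠ c → FNa a φ → FNa a (nu c φ)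

/-- Free variables of a formula. -/
inductive FVa : ℕ → NFm L → Prop
  | atom (X : ℕ) (A : NAtom L) : NAtom.FVa X A → FVa X (atom A)
  | eq₁ (X : ℕ) (t u : Tm L) : Tm.FVa X t → FVa X (eq t u)
  | eq₂ (X : ℕ) (t u : Tm L) : Tm.FVa X u → FVa X (eq t u)
  | frT (X : ℕ) (c : L.Name) (t : Tm L) : Tm.FVa X t → FVa X (fr c t)
  | sim₁ (X : ℕ) (t u : Tm L) : Tm.FVa X t → FVa X (sim t u)
  | sim₂ (X : ℕ) (t u : Tm L) : Tm.FVa X u → FVa X (sim t u)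
  | imp₁ (X : ℕ) (φ ψ : NFm L) : FVa X φ → FVa X (imp φ ψ)
  | imp₂ (X : ℕ) (φ ψ : NFm L) : FVa X ψ → FVa X (imp φ ψ)
  | and₁ (X : ℕ) (φ ψ : NFm L) : FVa X φ → FVa X (and φ ψ)
  | and₂ (X : ℕ) (φ ψ : NFm L) : FVa X ψ → FVa X (and φ ψ)
  | or₁ (X : ℕ) (φ ψ : NFm L) : FVa X φ → FVa X (or φ ψ)
  | or₂ (X : ℕ) (φ ψ : NFm L) : FVa X ψ → FVa X (or φ ψ)
  | all (X X' : ℕ) (σ : NomSort L.NSort L.DSort) (φ : NFm L) :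
      X ≠ X' → FVa X φ → FVa X (all X' σ φ)
  | ex (X X' : ℕ) (σ : NomSort L.NSort L.DSort) (φ : NFm L) :
      X ≠ X' → FVa X φ → FVa X (ex X' σ φ)
  | nu (X : ℕ) (c : L.Name) (φ : NFm L) : FVa X φ → FVa X (nu c φ)

end NFm

/-- Satisfaction `S ⊨ φ` of a (closed) formula by a Herbrand interpretation. -/
def FmSat (S : Set (NAtom L)) : NFm L → Prop
  | NFm.tt => True
  | NFm.ff => False
  | NFm.atom A => A ∈ S
  | NFm.eq t u => Aeq t u
  | NFm.fr a t => Fresh a t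
  | NFm.sim t u => SimTm t u
  | NFm.imp φ ψ => FmSat S φ → FmSat S ψ
  | NFm.and φ ψ => FmSat S φ ∧ FmSat S ψ
  | NFm.or φ ψ => FmSat S φ ∨ FmSat S ψ
  | NFm.all X σ φ => ∀ t : Tm L, IsTm t σ → FmSat S (φ.subst (substSingle X t))
  | NFm.ex X σ φ => ∃ t : Tm L, IsTm t σ ∧ FmSat S (φ.subst (substSingle X t))
  | NFm.nu a φ => ∀ b : L.Name, b.1 = a.1 → ¬ NFm.FNa b (NFm.nu a φ) →
      FmSat S (φ.swap b a)
termination_by φ => φ.size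
decreasing_by all_goals (simp [NFm.size]; try omega)
/-! ### Herbrand models and the one-step deduction operator -/

/-- A Herbrand model of a set of (closed) program clauses: an equivariant
subset of the Herbrand base satisfying every clause. -/
def IsHModel (Δ : Set (NCl L)) (H : Set (NAtom L)) : Prop :=
  H ⊆ BL L ∧ EquivariantSet H ∧ ∀ D ∈ Δ, ClSat H D

/-- The one-step deduction operator `T_D`. -/
def TOp : NCl L → Set (NAtom L) → Set (NAtom L)
  | NCl.tt, S => S
  | NCl.atom A, S => S ∪ {A}
  | NCl.and D D', S => TOp D S ∪ TOp D' S
  | NCl.imp G D, S => if GoalSat S G then TOp D S else S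
  | NCl.all X σ D, S => ⋃ (t : Tm L) (_ : IsTm t σ), TOp (D.subst (substSingle X t)) S
  | NCl.nu a D, S =>
      ⋃ (b : L.Name) (_ : b.1 = a.1 ∧ ¬ NCl.FNa b (NCl.nu a D)), TOp (D.swap a b) S
termination_by D _ => D.size
decreasing_by all_goals (simp [NCl.size]; try omega)

/-- The one-step deduction operator `T_Δ` of a (nonempty) program
`Δ = {D₁,…,Dₙ}`, i.e. `T_{D₁ ∧ ⋯ ∧ Dₙ}`. -/
def TProg (Δ : Set (NCl L)) (S : Set (NAtom L)) : Set (NAtom L) :=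
  ⋃ D ∈ Δ, TOp D S

/-! ### Contexts, substitutions and constraint entailment -/

/-- Context bindings: variable bindings `X:σ` and name bindings `#a:ν`. -/
inductive CtxBind (L : NomSig) : Type
  | v (X : ℕ) (σ : NomSort L.NSort L.DSort) : CtxBind L
  | n (a : L.Name) : CtxBind L

/-- Contexts, as lists of bindings with the *most recent binding first*. -/
abbrev Ctxx (L : NomSig) : Type := List (CtxBind L)

/-- The variables declared in a context. -/
def ctxVars : Ctxx L → Set ℕ
  | [] => ∅
  | CtxBind.v X _ :: Ξ => insert X (ctxVars Ξ)
  | CtxBind.n _ :: Ξ => ctxVars Ξ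

/-- The names declared in a context. -/
def ctxNames : Ctxx L → Set L.Name
  | [] => ∅
  | CtxBind.v _ _ :: Ξ => ctxNames Ξ
  | CtxBind.n a :: Ξ => insert a (ctxNames Ξ)

def CtxBind.key : CtxBind L → ℕ ⊕ L.Name
  | v X _ => Sum.inl X
  | n a => Sum.inr a

/-- All bindings of a context are distinct. -/
def CtxWF (Ξ : Ctxx L) : Prop := Ξ.Pairwise (fun b c => b.key ≠ c.key)

/-- `θ : Σ`: the ground substitution `θ` satisfies the context `Σ`. -/
def SubstOk : Ctxx L → (ℕ → Tm L) → Prop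
  | [], _ => True
  | CtxBind.v X σ :: Ξ, θ => IsTm (θ X) σ ∧ SubstOk Ξ θ
  | CtxBind.n a :: Ξ, θ => (∀ X ∈ ctxVars Ξ, Fresh a (θ X)) ∧ SubstOk Ξ θ

/-- `θ` satisfies every constraint in `∇`. -/
def SatAll (θ : ℕ → Tm L) (Φ : Finset (NCon L)) : Prop :=
  ∀ C ∈ Φ, ConSat (C.subst θ)

/-- Constraint entailment `Σ;∇ ⊨ C`. -/
def EntC (Ξ : Ctxx L) (Φ : Finset (NCon L)) (C : NCon L) : Prop :=
  ∀ θ : ℕ → Tm L, SubstOk Ξ θ → SatAll θ Φ → ConSat (C.subst θ)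

/-- The free variables and names of a constraint are declared in `Σ`. -/
def ConDecl (Ξ : Ctxx L) (C : NCon L) : Prop :=
  (∀ X, NCon.FVa X C → X ∈ ctxVars Ξ) ∧ (∀ a, NCon.FNa a C → a ∈ ctxNames Ξ)

/-- The free variables and names of a goal are declared in `Σ`. -/
def GoalDecl (Ξ : Ctxx L) (G : NGoal L) : Prop :=
  (∀ X, NGoal.FVa X G → X ∈ ctxVars Ξ) ∧ (∀ a, NGoal.FNa a G → a ∈ ctxNames Ξ)

/-- The free variables and names of a program clause are declared in `Σ`. -/
def ClDecl (Ξ : Ctxx L) (D : NCl L) : Prop :=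
  (∀ X, NCl.FVa X D → X ∈ ctxVars Ξ) ∧ (∀ a, NCl.FNa a D → a ∈ ctxNames Ξ)

/-- The free variables and names of an atom are declared in `Σ`. -/
def AtomDecl (Ξ : Ctxx L) (A : NAtom L) : Prop :=
  (∀ X, NAtom.FVa X A → X ∈ ctxVars Ξ) ∧ (∀ a, NAtom.FNa a A → a ∈ ctxNames Ξ)

/-! ### Uniform / focused proof search -/

mutual
/-- Uniform derivability `Σ;Δ;∇ ⟶ G`. -/
inductive UD (Δ : Set (NCl L)) : Ctxx L → Finset (NCon L) → NGoal L → Prop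
  | top (Ξ : Ctxx L) (Φ : Finset (NCon L)) : UD Δ Ξ Φ NGoal.tt
  | con (Ξ : Ctxx L) (Φ : Finset (NCon L)) (C : NCon L) :
      EntC Ξ Φ C → UD Δ Ξ Φ (NGoal.con C)
  | andR (Ξ : Ctxx L) (Φ : Finset (NCon L)) (G₁ G₂ : NGoal L) :
      UD Δ Ξ Φ G₁ → UD Δ Ξ Φ G₂ → UD Δ Ξ Φ (NGoal.and G₁ G₂)
  | orR₁ (Ξ : Ctxx L) (Φ : Finset (NCon L)) (G₁ G₂ : NGoal L) :
      UD Δ Ξ Φ G₁ → UD Δ Ξ Φ (NGoal.or G₁ G₂)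
  | orR₂ (Ξ : Ctxx L) (Φ : Finset (NCon L)) (G₁ G₂ : NGoal L) :
      UD Δ Ξ Φ G₂ → UD Δ Ξ Φ (NGoal.or G₁ G₂)
  | exR (Ξ : Ctxx L) (Φ : Finset (NCon L)) (X : ℕ) (σ : NomSort L.NSort L.DSort)
      (C : NCon L) (G : NGoal L) :
      EntC Ξ Φ (NCon.ex X σ C) → UD Δ (CtxBind.v X σ :: Ξ) (insert C Φ) G →
      UD Δ Ξ Φ (NGoal.ex X σ G)
  | nuR (Ξ : Ctxx L) (Φ : Finset (NCon L)) (a : L.Name) (C : NCon L) (G : NGoal L) :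
      EntC Ξ Φ (NCon.nu a C) → UD Δ (CtxBind.n a :: Ξ) (insert C Φ) G →
      UD Δ Ξ Φ (NGoal.nu a G)
  | sel (Ξ : Ctxx L) (Φ : Finset (NCon L)) (D : NCl L) (A : NAtom L) :
      D ∈ Δ → FD Δ Ξ Φ D A → UD Δ Ξ Φ (NGoal.atom A)

/-- Focused derivability `Σ;Δ;∇ ⟶ [D] ⇒ A`. -/
inductive FD (Δ : Set (NCl L)) : Ctxx L → Finset (NCon L) → NCl L → NAtom L → Prop
  | hyp (Ξ : Ctxx L) (Φ : Finset (NCon L)) (A' A : NAtom L) :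
      EntC Ξ Φ (NCon.simA A' A) → FD Δ Ξ Φ (NCl.atom A') A
  | andL₁ (Ξ : Ctxx L) (Φ : Finset (NCon L)) (D₁ D₂ : NCl L) (A : NAtom L) :
      FD Δ Ξ Φ D₁ A → FD Δ Ξ Φ (NCl.and D₁ D₂) A
  | andL₂ (Ξ : Ctxx L) (Φ : Finset (NCon L)) (D₁ D₂ : NCl L) (A : NAtom L) :
      FD Δ Ξ Φ D₂ A → FD Δ Ξ Φ (NCl.and D₁ D₂) A
  | impL (Ξ : Ctxx L) (Φ : Finset (NCon L)) (G : NGoal L) (D : NCl L) (A : NAtom L) :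
      FD Δ Ξ Φ D A → UD Δ Ξ Φ G → FD Δ Ξ Φ (NCl.imp G D) A
  | allL (Ξ : Ctxx L) (Φ : Finset (NCon L)) (X : ℕ) (σ : NomSort L.NSort L.DSort)
      (C : NCon L) (D : NCl L) (A : NAtom L) :
      EntC Ξ Φ (NCon.ex X σ C) → FD Δ (CtxBind.v X σ :: Ξ) (insert C Φ) D A →
      FD Δ Ξ Φ (NCl.all X σ D) A
  | nuL (Ξ : Ctxx L) (Φ : Finset (NCon L)) (a : L.Name) (C : NCon L) (D : NCl L)
      (A : NAtom L) :
      EntC Ξ Φ (NCon.nu a C) → FD Δ (CtxBind.n a :: Ξ) (insert C Φ) D A →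
      FD Δ Ξ Φ (NCl.nu a D) A
end

mutual
/-- Uniform derivability for ≈-resolution, `Σ;Δ;∇ ⟶≈ G`. -/
inductive UDe (Δ : Set (NCl L)) : Ctxx L → Finset (NCon L) → NGoal L → Prop
  | top (Ξ : Ctxx L) (Φ : Finset (NCon L)) : UDe Δ Ξ Φ NGoal.tt
  | con (Ξ : Ctxx L) (Φ : Finset (NCon L)) (C : NCon L) :
      EntC Ξ Φ C → UDe Δ Ξ Φ (NGoal.con C)
  | andR (Ξ : Ctxx L) (Φ : Finset (NCon L)) (G₁ G₂ : NGoal L) :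
      UDe Δ Ξ Φ G₁ → UDe Δ Ξ Φ G₂ → UDe Δ Ξ Φ (NGoal.and G₁ G₂)
  | orR₁ (Ξ : Ctxx L) (Φ : Finset (NCon L)) (G₁ G₂ : NGoal L) :
      UDe Δ Ξ Φ G₁ → UDe Δ Ξ Φ (NGoal.or G₁ G₂)
  | orR₂ (Ξ : Ctxx L) (Φ : Finset (NCon L)) (G₁ G₂ : NGoal L) :
      UDe Δ Ξ Φ G₂ → UDe Δ Ξ Φ (NGoal.or G₁ G₂)
  | exR (Ξ : Ctxx L) (Φ : Finset (NCon L)) (X : ℕ) (σ : NomSort L.NSort L.DSort)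
      (C : NCon L) (G : NGoal L) :
      EntC Ξ Φ (NCon.ex X σ C) → UDe Δ (CtxBind.v X σ :: Ξ) (insert C Φ) G →
      UDe Δ Ξ Φ (NGoal.ex X σ G)
  | nuR (Ξ : Ctxx L) (Φ : Finset (NCon L)) (a : L.Name) (C : NCon L) (G : NGoal L) :
      EntC Ξ Φ (NCon.nu a C) → UDe Δ (CtxBind.n a :: Ξ) (insert C Φ) G →
      UDe Δ Ξ Φ (NGoal.nu a G)
  | sel (Ξ : Ctxx L) (Φ : Finset (NCon L)) (D : NCl L) (A : NAtom L) :
      D ∈ Δ → FDe Δ Ξ Φ D A → UDe Δ Ξ Φ (NGoal.atom A)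

/-- Focused derivability for ≈-resolution, `Σ;Δ;∇ ⟶≈ [D] ⇒ A`. -/
inductive FDe (Δ : Set (NCl L)) : Ctxx L → Finset (NCon L) → NCl L → NAtom L → Prop
  | hyp (Ξ : Ctxx L) (Φ : Finset (NCon L)) (A' A : NAtom L) :
      EntC Ξ Φ (NCon.aeqA A' A) → FDe Δ Ξ Φ (NCl.atom A') A
  | andL₁ (Ξ : Ctxx L) (Φ : Finset (NCon L)) (D₁ D₂ : NCl L) (A : NAtom L) :
      FDe Δ Ξ Φ D₁ A → FDe Δ Ξ Φ (NCl.and D₁ D₂) A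
  | andL₂ (Ξ : Ctxx L) (Φ : Finset (NCon L)) (D₁ D₂ : NCl L) (A : NAtom L) :
      FDe Δ Ξ Φ D₂ A → FDe Δ Ξ Φ (NCl.and D₁ D₂) A
  | impL (Ξ : Ctxx L) (Φ : Finset (NCon L)) (G : NGoal L) (D : NCl L) (A : NAtom L) :
      FDe Δ Ξ Φ D A → UDe Δ Ξ Φ G → FDe Δ Ξ Φ (NCl.imp G D) A
  | allL (Ξ : Ctxx L) (Φ : Finset (NCon L)) (X : ℕ) (σ : NomSort L.NSort L.DSort)
      (C : NCon L) (D : NCl L) (A : NAtom L) :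
      EntC Ξ Φ (NCon.ex X σ C) → FDe Δ (CtxBind.v X σ :: Ξ) (insert C Φ) D A →
      FDe Δ Ξ Φ (NCl.all X σ D) A
  | nuL (Ξ : Ctxx L) (Φ : Finset (NCon L)) (a : L.Name) (C : NCon L) (D : NCl L)
      (A : NAtom L) :
      EntC Ξ Φ (NCon.nu a C) → FDe Δ (CtxBind.n a :: Ξ) (insert C Φ) D A →
      FDe Δ Ξ Φ (NCl.nu a D) A
end

/-! ### Residuated proof search -/

mutual
/-- Residuated uniform derivability `Σ;Δ ⟶ G ↘ C`. -/
inductive RG (Δ : Set (NCl L)) : Ctxx L → NGoal L → NCon L → Prop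
  | con (Ξ : Ctxx L) (C : NCon L) : RG Δ Ξ (NGoal.con C) C
  | top (Ξ : Ctxx L) : RG Δ Ξ NGoal.tt NCon.tt
  | andR (Ξ : Ctxx L) (G₁ G₂ : NGoal L) (C₁ C₂ : NCon L) :
      RG Δ Ξ G₁ C₁ → RG Δ Ξ G₂ C₂ → RG Δ Ξ (NGoal.and G₁ G₂) (NCon.and C₁ C₂)
  | orR₁ (Ξ : Ctxx L) (G₁ G₂ : NGoal L) (C : NCon L) :
      RG Δ Ξ G₁ C → RG Δ Ξ (NGoal.or G₁ G₂) C
  | orR₂ (Ξ : Ctxx L) (G₁ G₂ : NGoal L) (C : NCon L) :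
      RG Δ Ξ G₂ C → RG Δ Ξ (NGoal.or G₁ G₂) C
  | exR (Ξ : Ctxx L) (X : ℕ) (σ : NomSort L.NSort L.DSort) (G : NGoal L) (C : NCon L) :
      RG Δ (CtxBind.v X σ :: Ξ) G C → RG Δ Ξ (NGoal.ex X σ G) (NCon.ex X σ C)
  | nuR (Ξ : Ctxx L) (a : L.Name) (G : NGoal L) (C : NCon L) :
      RG Δ (CtxBind.n a :: Ξ) G C → RG Δ Ξ (NGoal.nu a G) (NCon.nu a C)
  | back (Ξ : Ctxx L) (A : NAtom L) (D : NCl L) (G : NGoal L) (C : NCon L) :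
      D ∈ Δ → RF Δ Ξ D A G → RG Δ Ξ G C → RG Δ Ξ (NGoal.atom A) C

/-- Residuated focused derivability `Σ;Δ ⟶ [D] ⇒ A ↘ G`. -/
inductive RF (Δ : Set (NCl L)) : Ctxx L → NCl L → NAtom L → NGoal L → Prop
  | hyp (Ξ : Ctxx L) (A' A : NAtom L) :
      RF Δ Ξ (NCl.atom A') A (NGoal.con (NCon.simA A A'))
  | andL₁ (Ξ : Ctxx L) (D₁ D₂ : NCl L) (A : NAtom L) (G : NGoal L) :
      RF Δ Ξ D₁ A G → RF Δ Ξ (NCl.and D₁ D₂) A G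
  | andL₂ (Ξ : Ctxx L) (D₁ D₂ : NCl L) (A : NAtom L) (G : NGoal L) :
      RF Δ Ξ D₂ A G → RF Δ Ξ (NCl.and D₁ D₂) A G
  | impL (Ξ : Ctxx L) (G : NGoal L) (D : NCl L) (A : NAtom L) (G' : NGoal L) :
      RF Δ Ξ D A G' → RF Δ Ξ (NCl.imp G D) A (NGoal.and G G')
  | allL (Ξ : Ctxx L) (X : ℕ) (σ : NomSort L.NSort L.DSort) (D : NCl L) (A : NAtom L)
      (G : NGoal L) :
      RF Δ (CtxBind.v X σ :: Ξ) D A G → RF Δ Ξ (NCl.all X σ D) A (NGoal.ex X σ G)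
  | nuL (Ξ : Ctxx L) (a : L.Name) (D : NCl L) (A : NAtom L) (G : NGoal L) :
      RF Δ (CtxBind.n a :: Ξ) D A G → RF Δ Ξ (NCl.nu a D) A (NGoal.nu a G)
end

/-! ### Operational semantics -/

/-- Operational states `⟨Σ; Γ; ∇⟩`. -/
structure OState (L : NomSig) : Type where
  ctx : Ctxx L
  goals : List (NGoal L)
  cons : Finset (NCon L)

/-- The operational transition relation relative to a program `Δ`. -/
inductive OStep (Δ : Set (NCl L)) : OState L → OState L → Prop
  | back (Ξ : Ctxx L) (Φ : Finset (NCon L)) (Γ : List (NGoal L)) (D : NCl L)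
      (A : NAtom L) (G : NGoal L) :
      D ∈ Δ → RF Δ Ξ D A G →
      OStep Δ ⟨Ξ, NGoal.atom A :: Γ, Φ⟩ ⟨Ξ, G :: Γ, Φ⟩
  | con (Ξ : Ctxx L) (Φ : Finset (NCon L)) (Γ : List (NGoal L)) (C : NCon L) :
      (∃ θ : ℕ → Tm L, SubstOk Ξ θ ∧ SatAll θ (insert C Φ)) →
      OStep Δ ⟨Ξ, NGoal.con C :: Γ, Φ⟩ ⟨Ξ, Γ, insert C Φ⟩
  | top (Ξ : Ctxx L) (Φ : Finset (NCon L)) (Γ : List (NGoal L)) :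
      OStep Δ ⟨Ξ, NGoal.tt :: Γ, Φ⟩ ⟨Ξ, Γ, Φ⟩
  | and (Ξ : Ctxx L) (Φ : Finset (NCon L)) (Γ : List (NGoal L)) (G₁ G₂ : NGoal L) :
      OStep Δ ⟨Ξ, NGoal.and G₁ G₂ :: Γ, Φ⟩ ⟨Ξ, G₁ :: G₂ :: Γ, Φ⟩
  | or₁ (Ξ : Ctxx L) (Φ : Finset (NCon L)) (Γ : List (NGoal L)) (G₁ G₂ : NGoal L) :
      OStep Δ ⟨Ξ, NGoal.or G₁ G₂ :: Γ, Φ⟩ ⟨Ξ, G₁ :: Γ, Φ⟩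
  | or₂ (Ξ : Ctxx L) (Φ : Finset (NCon L)) (Γ : List (NGoal L)) (G₁ G₂ : NGoal L) :
      OStep Δ ⟨Ξ, NGoal.or G₁ G₂ :: Γ, Φ⟩ ⟨Ξ, G₂ :: Γ, Φ⟩
  | ex (Ξ : Ctxx L) (Φ : Finset (NCon L)) (Γ : List (NGoal L)) (X : ℕ)
      (σ : NomSort L.NSort L.DSort) (G : NGoal L) :
      OStep Δ ⟨Ξ, NGoal.ex X σ G :: Γ, Φ⟩ ⟨CtxBind.v X σ :: Ξ, G :: Γ, Φ⟩
  | nu (Ξ : Ctxx L) (Φ : Finset (NCon L)) (Γ : List (NGoal L)) (a : L.Name)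
      (G : NGoal L) :
      OStep Δ ⟨Ξ, NGoal.nu a G :: Γ, Φ⟩ ⟨CtxBind.n a :: Ξ, G :: Γ, Φ⟩

/-- `∃Σ[C]`: close a constraint by quantifying over all bindings of a context
(innermost quantifier for the most recent binding). -/
def exCtx : Ctxx L → NCon L → NCon L
  | [], C => C
  | CtxBind.v X σ :: Ξ, C => exCtx Ξ (NCon.ex X σ C)
  | CtxBind.n a :: Ξ, C => exCtx Ξ (NCon.nu a C)

/-- The conjunction of a finite set of constraints. -/
def bigAnd (Φ : Finset (NCon L)) : NCon L := Φ.toList.foldr NCon.and NCon.tt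

/-! ### Equivariance of intersections -/

theorem swapName_swapName (a b c : L.Name) : swapName a b (swapName a b c) = c := by
  unfold swapName
  split_ifs <;> simp_all

theorem Tm.swap_swap (a b : L.Name) : ∀ t : Tm L, Tm.swap a b (Tm.swap a b t) = t
  | .var X => by simp [Tm.swap, Tm.rename]
  | .name c => by simp [Tm.swap, Tm.rename, swapName_swapName]
  | .app g ts => by
      have ih : ∀ t ∈ ts, Tm.swap a b (Tm.swap a b t) = t := fun t ht => Tm.swap_swap a b t
      simp only [Tm.swap] at ih ⊢
      simp only [Tm.rename, Tm.app.injEq, true_and, List.map_attach_eq_pmap, List.pmap_eq_map,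
        List.map_map]
      exact (List.map_congr_left ih).trans (List.map_id ts)
  | .abs c t => by
      have ih := Tm.swap_swap a b t
      simp only [Tm.swap] at ih ⊢
      simp [Tm.rename, swapName_swapName, ih]

theorem NAtom.swap_swap (a b : L.Name) (A : NAtom L) : NAtom.swap a b (NAtom.swap a b A) = A := by
  obtain ⟨p, ts⟩ := A
  simp only [NAtom.swap, NAtom.rename, List.map_map, NAtom.mk.injEq, true_and]
  exact (List.map_congr_left fun t _ => Tm.swap_swap a b t).trans (List.map_id ts)

theorem EquivariantSet.sInter {MM : Set (Set (NAtom L))} (h : ∀ H ∈ MM, EquivariantSet H) :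
    EquivariantSet (⋂₀ MM) := by
  intro a b hab
  have hmem : ∀ A ∈ ⋂₀ MM, NAtom.swap a b A ∈ ⋂₀ MM := fun A hA H hH =>
    h H hH a b hab ▸ Set.mem_image_of_mem _ (hA H hH)
  apply Set.Subset.antisymm
  · rintro _ ⟨A, hA, rfl⟩
    exact hmem A hA
  · exact fun A hA => ⟨_, hmem A hA, NAtom.swap_swap a b A⟩

/-! ### Satisfaction in subsets and intersections -/

theorem GoalSat.mono {S T : Set (NAtom L)} (hST : S ⊆ T) :
    ∀ G : NGoal L, GoalSat S G → GoalSat T G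
  | .tt => by simp [GoalSat]
  | .atom A => by simpa [GoalSat] using @hST A
  | .con C => by simp [GoalSat]
  | .and G G' => by
      simp only [GoalSat]
      exact And.imp (GoalSat.mono hST G) (GoalSat.mono hST G')
  | .or G G' => by
      simp only [GoalSat]
      exact Or.imp (GoalSat.mono hST G) (GoalSat.mono hST G')
  | .ex X σ G => by
      simp only [GoalSat]
      rintro ⟨t, ht, hG⟩
      exact ⟨t, ht, GoalSat.mono hST (G.subst (substSingle X t)) hG⟩
  | .nu a G => by
      simp only [GoalSat]
      exact fun hG b hb hfr => GoalSat.mono hST (G.swap b a) (hG b hb hfr)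
termination_by G => G.size
decreasing_by all_goals (simp [NGoal.size]; try omega)

/-- Truth of a clause is preserved by intersections, because goals occur in clauses only as
premises and are monotone. -/
theorem ClSat.sInter {MM : Set (Set (NAtom L))} :
    ∀ D : NCl L, (∀ H ∈ MM, ClSat H D) → ClSat (⋂₀ MM) D
  | .tt => by simp [ClSat]
  | .atom A => by simp [ClSat]
  | .and D D' => by
      simp only [ClSat]
      exact fun h => ⟨ClSat.sInter D fun H hH => (h H hH).1,
        ClSat.sInter D' fun H hH => (h H hH).2⟩
  | .imp G D => by
      simp only [ClSat]
      exact fun h hG => ClSat.sInter D fun H hH =>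
        h H hH (GoalSat.mono (Set.sInter_subset_of_mem hH) G hG)
  | .all X σ D => by
      simp only [ClSat]
      exact fun h t ht => ClSat.sInter (D.subst (substSingle X t)) fun H hH => h H hH t ht
  | .nu a D => by
      simp only [ClSat]
      exact fun h b hb hfr => ClSat.sInter (D.swap b a) fun H hH => h H hH b hb hfr
termination_by D => D.size
decreasing_by all_goals (simp [NCl.size]; try omega)

/-! **Statement 2.**  The intersection of a nonempty family of Herbrand models
of a program is a Herbrand model. -/
theorem stmt2 (L : NomSig)
    (hinhab : ∀ σ : NomSort L.NSort L.DSort, ∃ t : Tm L, IsTm t σ)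
    (Δ : Set (NCl L)) (hfin : Δ.Finite) (hclv : ∀ D ∈ Δ, NCl.ClosedV D)
    (MM : Set (Set (NAtom L))) (hne : MM.Nonempty) (hmods : ∀ H ∈ MM, IsHModel Δ H) :
    IsHModel Δ (⋂₀ MM) := by
  obtain ⟨H₀, hH₀⟩ := hne
  exact ⟨fun A hA => (hmods H₀ hH₀).1 (hA H₀ hH₀),
    EquivariantSet.sInter fun H hH => (hmods H hH).2.1,
    fun D hD => ClSat.sInter D fun H hH => (hmods H hH).2.2 D hD⟩

end
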